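/- Let G~ be a mixed bicyclic graph whose underlying graph is θ(p,l,q) with p even and l, q odd. Then r(G~) = 2m(G) − 2κ(G) if and only if the two odd cycles of G~ have odd signatures and the even cycle C~_{q+l−2} of G~ satisfies q + l + σ(C~_{q+l−2}) ≡ 2 (mod 4). -/

import Mathlib

open scoped Classical

namespace MixedPaper

universe u

/-- A mixed graph: a finite simple graph together with an orientation of a subset
of its edges.  `arc u v = true` means there is an arc from `u` to `v`. -/
structure MixedGraph (V : Type u) where
  graph : SimpleGraph V
  arc : V → V → Bool
  arc_adj : ∀ u v, arc u v → graph.Adj u v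
  arc_antisymm : ∀ u v, arc u v → ¬ arc v u

variable {V : Type u}

/-- The Hermitian adjacency matrix of a mixed graph. -/
noncomputable def MixedGraph.hMatrix [Fintype V] [DecidableEq V] (M : MixedGraph V) :
    Matrix V V ℂ := fun u v =>
  if M.arc u v then Complex.I
  else if M.arc v u then -Complex.I
  else if M.graph.Adj u v then 1 else 0

/-- The H-rank of a mixed graph: the rank of its Hermitian adjacency matrix. -/
noncomputable def MixedGraph.hRank [Fintype V] [DecidableEq V] (M : MixedGraph V) : ℕ :=
  M.hMatrix.rank

/-- The matching number of a simple graph. -/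
noncomputable def matchingNumber (G : SimpleGraph V) : ℕ :=
  sSup {k | ∃ N : G.Subgraph, N.IsMatching ∧ N.edgeSet.ncard = k}

/-- A subgraph is a cycle subgraph if it is connected and every one of its vertices
has exactly two neighbours in it. -/
def IsCycleSubgraph {G : SimpleGraph V} (C : G.Subgraph) : Prop :=
  C.Connected ∧ ∀ v ∈ C.verts, {w | C.Adj v w}.ncard = 2

/-- κ(G) : the number of even cycles of G. -/
noncomputable def evenCycleCount (G : SimpleGraph V) : ℕ :=
  {C : G.Subgraph | IsCycleSubgraph C ∧ Even C.verts.ncard}.ncard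

/-- c(G) = |E(G)| - |V(G)| + ω(G), the cyclomatic number. -/
noncomputable def cyclomatic [Fintype V] (G : SimpleGraph V) : ℤ :=
  (G.edgeSet.ncard : ℤ) - (Fintype.card V : ℤ) + (Nat.card G.ConnectedComponent : ℤ)

/-- The induced mixed subgraph on a set of vertices. -/
def MixedGraph.induce (M : MixedGraph V) (S : Set V) : MixedGraph S where
  graph := M.graph.induce S
  arc := fun a b => M.arc a.1 b.1
  arc_adj := fun a b h => M.arc_adj a.1 b.1 h
  arc_antisymm := fun a b h => M.arc_antisymm a.1 b.1 h

/-- The mixed subgraph induced by a connected component of the underlying graph. -/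
def MixedGraph.comp (M : MixedGraph V) (c : M.graph.ConnectedComponent) :
    MixedGraph c.supp := M.induce c.supp

/-- The signature |f - b| of a closed walk in a mixed graph: the absolute difference
between the numbers of forward and backward arcs along the walk. -/
def walkSignature (M : MixedGraph V) {u : V} (w : M.graph.Walk u u) : ℕ :=
  ((w.darts.countP fun d => M.arc d.toProd.1 d.toProd.2 : ℤ) -
    (w.darts.countP fun d => M.arc d.toProd.2 d.toProd.1 : ℤ)).natAbs

/-- The signature of the cycle subgraph `C` of the mixed graph `M` satisfies the
predicate `P` (expressed via a closed walk traversing `C`; the signature does not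
depend on the choice of traversal). -/
def CycleSig (M : MixedGraph V) (C : M.graph.Subgraph) (P : ℕ → Prop) : Prop :=
  ∃ (u : V) (w : M.graph.Walk u u), w.IsCycle ∧
    {v | v ∈ w.support} = C.verts ∧ {e | e ∈ w.edges} = C.edgeSet ∧
    P (walkSignature M w)

/-- `C` is a pendant cycle with unique vertex `x` of degree 3. -/
def IsPendantCycle (G : SimpleGraph V) (C : G.Subgraph) (x : V) : Prop :=
  IsCycleSubgraph C ∧ x ∈ C.verts ∧ {w | G.Adj x w}.ncard = 3 ∧
    ∀ v ∈ C.verts, v ≠ x → {w | G.Adj v w}.ncard = 2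

/-- G has no pendant vertices (vertices of degree 1). -/
def NoPendantVerts (G : SimpleGraph V) : Prop := ∀ u : V, {w | G.Adj u w}.ncard ≠ 1

/-- The (distinct) cycles of G are pairwise vertex-disjoint. -/
def CyclesVertexDisjoint (G : SimpleGraph V) : Prop :=
  ∀ C₁ C₂ : G.Subgraph, IsCycleSubgraph C₁ → IsCycleSubgraph C₂ → C₁ ≠ C₂ →
    Disjoint C₁.verts C₂.verts

/-- The (distinct) even cycles of G are pairwise vertex-disjoint. -/
def EvenCyclesVertexDisjoint (G : SimpleGraph V) : Prop :=
  ∀ C₁ C₂ : G.Subgraph, IsCycleSubgraph C₁ → IsCycleSubgraph C₂ →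
    Even C₁.verts.ncard → Even C₂.verts.ncard → C₁ ≠ C₂ →
    Disjoint C₁.verts C₂.verts

/-- One pendant `K₂` deletion step, recorded on the surviving vertex sets:
`u` is pendant in the graph induced on `S` with unique neighbour `v` there,
and both are deleted. -/
def PendantStep (G : SimpleGraph V) (S T : Set V) : Prop :=
  ∃ u v, u ∈ S ∧ v ∈ S ∧ {w | w ∈ S ∧ G.Adj u w} = {v} ∧ T = S \ {u, v}

/-- `S` is reachable from the full vertex set by a sequence of pendant K₂ deletions. -/
def PendantReaches (G : SimpleGraph V) (S : Set V) : Prop :=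
  Relation.ReflTransGen (PendantStep G) Set.univ S

/-- The graph induced on `S` has no pendant vertices. -/
def NoPendantIn (G : SimpleGraph V) (S : Set V) : Prop :=
  ∀ u ∈ S, {w | w ∈ S ∧ G.Adj u w}.ncard ≠ 1

/-- `u` lies on some even cycle of `G`. -/
def OnEvenCycle (G : SimpleGraph V) (u : V) : Prop :=
  ∃ C : G.Subgraph, IsCycleSubgraph C ∧ Even C.verts.ncard ∧ u ∈ C.verts

/-- G is the graph ∞(p,1,q): two cycles of lengths p and q sharing exactly one vertex. -/
def IsInfinityGraph (G : SimpleGraph V) (p q : ℕ) : Prop :=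
  ∃ C₁ C₂ : G.Subgraph, IsCycleSubgraph C₁ ∧ IsCycleSubgraph C₂ ∧
    C₁.verts.ncard = p ∧ C₂.verts.ncard = q ∧
    (C₁.verts ∩ C₂.verts).ncard = 1 ∧ C₁ ⊔ C₂ = ⊤

/-- G is the theta graph θ(p,l,q): three internally disjoint paths with p, l, q
vertices respectively, joining two common endvertices. -/
def IsThetaGraph (G : SimpleGraph V) (p l q : ℕ) : Prop :=
  2 ≤ p ∧ 2 ≤ l ∧ 2 ≤ q ∧ ¬(p = 2 ∧ l = 2) ∧ ¬(p = 2 ∧ q = 2) ∧ ¬(l = 2 ∧ q = 2) ∧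
  ∃ (a b : V) (W₁ W₂ W₃ : G.Walk a b), W₁.IsPath ∧ W₂.IsPath ∧ W₃.IsPath ∧
    W₁.length = p - 1 ∧ W₂.length = l - 1 ∧ W₃.length = q - 1 ∧
    (∀ v : V, v ∈ W₁.support ∨ v ∈ W₂.support ∨ v ∈ W₃.support) ∧
    (∀ e ∈ G.edgeSet, e ∈ W₁.edges ∨ e ∈ W₂.edges ∨ e ∈ W₃.edges) ∧
    {v | v ∈ W₁.support ∧ v ∈ W₂.support} = {a, b} ∧
    {v | v ∈ W₁.support ∧ v ∈ W₃.support} = {a, b} ∧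
    {v | v ∈ W₂.support ∧ v ∈ W₃.support} = {a, b}

/-- Every odd cycle of `M` has signature satisfying `P`. -/
def OddCyclesSig (M : MixedGraph V) (P : ℕ → Prop) : Prop :=
  ∀ C : M.graph.Subgraph, IsCycleSubgraph C → Odd C.verts.ncard → CycleSig M C P

/-- Every even cycle of `M`, of length `n`, has signature `s` satisfying `P n s`. -/
def EvenCyclesSig (M : MixedGraph V) (P : ℕ → ℕ → Prop) : Prop :=
  ∀ C : M.graph.Subgraph, IsCycleSubgraph C → Even C.verts.ncard →
    CycleSig M C (P C.verts.ncard)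

/-- The whole mixed graph is a single cycle. -/
def IsCycleMG (M : MixedGraph V) : Prop := IsCycleSubgraph (⊤ : M.graph.Subgraph)

/-- The family 𝔊₀. -/
def MemG0 [Fintype V] [DecidableEq V] (M : MixedGraph V) : Prop :=
  M.graph.Connected ∧ 1 ≤ cyclomatic M.graph ∧ CyclesVertexDisjoint M.graph ∧
  NoPendantVerts M.graph ∧
  ∃ (C : M.graph.Subgraph) (x : V), IsPendantCycle M.graph C x ∧ Odd C.verts.ncard ∧
    CycleSig M C Odd ∧
    ((M.induce (C.vertsᶜ ∪ {x})).hRank : ℤ) =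
      2 * (matchingNumber (M.induce (C.vertsᶜ ∪ {x})).graph : ℤ) -
        2 * cyclomatic (M.induce (C.vertsᶜ ∪ {x})).graph

/-- The family 𝔛₁ : mixed ∞(p,1,q)-graphs, p even, q odd, whose odd cycle has odd
signature and whose even cycle C̃_p satisfies σ ≡ p (mod 4). -/
def MemX1 (M : MixedGraph V) : Prop :=
  ∃ p q : ℕ, Even p ∧ Odd q ∧ IsInfinityGraph M.graph p q ∧
    OddCyclesSig M Odd ∧ EvenCyclesSig M (fun n s => s % 4 = n % 4)

/-- The family 𝔛₂ : mixed θ(p,l,q)-graphs, p even, l q odd, whose two odd cycles have odd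
signatures and whose even cycle C̃_{q+l-2} satisfies q + l + σ ≡ 2 (mod 4). -/
def MemX2 (M : MixedGraph V) : Prop :=
  ∃ p l q : ℕ, Even p ∧ Odd l ∧ Odd q ∧ IsThetaGraph M.graph p l q ∧
    OddCyclesSig M Odd ∧ EvenCyclesSig M (fun _ s => (q + l + s) % 4 = 2)

/-- The family 𝔊₂ = 𝔊₀ ∪ 𝔛₁ ∪ 𝔛₂ together with the mixed odd cycles of odd signature. -/
def MemG2 [Fintype V] [DecidableEq V] (M : MixedGraph V) : Prop :=
  MemG0 M ∨ MemX1 M ∨ MemX2 M ∨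
    (IsCycleMG M ∧ Odd (Nat.card V) ∧ CycleSig M ⊤ Odd)

/-- The family 𝔜₁. -/
def MemY1 (M : MixedGraph V) : Prop :=
  ∃ p q : ℕ, Even p ∧ Odd q ∧ IsInfinityGraph M.graph p q ∧
    OddCyclesSig M Even ∧ EvenCyclesSig M (fun n s => s % 4 = n % 4)

/-- The family 𝔜₂. -/
def MemY2 (M : MixedGraph V) : Prop :=
  ∃ p l q : ℕ, Even p ∧ Odd l ∧ Odd q ∧ IsThetaGraph M.graph p l q ∧
    OddCyclesSig M Even ∧ EvenCyclesSig M (fun _ s => (q + l + s) % 4 = 2)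

/-- `M` is a disjoint union of `k` even cycles and one odd cycle with even signature. -/
def IsDisjointUnionEvenCyclesOddCycleEvenSig (M : MixedGraph V) (k : ℤ) : Prop :=
  (∀ c : M.graph.ConnectedComponent, IsCycleMG (M.comp c)) ∧
  (({c : M.graph.ConnectedComponent | Even (Nat.card c.supp)}.ncard : ℤ) = k) ∧
  (∃! c : M.graph.ConnectedComponent, Odd (Nat.card c.supp)) ∧
  (∀ c : M.graph.ConnectedComponent, Odd (Nat.card c.supp) →
    CycleSig (M.comp c) ⊤ Even)

/-- The family 𝔉₀. -/
def MemF0 [Fintype V] [DecidableEq V] (M : MixedGraph V) : Prop :=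
  M.graph.Connected ∧ 2 ≤ cyclomatic M.graph ∧ CyclesVertexDisjoint M.graph ∧
  NoPendantVerts M.graph ∧
  (∃ (C₀ : M.graph.Subgraph) (x₀ : V), IsPendantCycle M.graph C₀ x₀ ∧ Odd C₀.verts.ncard ∧
    CycleSig M C₀ Even ∧
    ∀ C : M.graph.Subgraph, IsCycleSubgraph C → C ≠ C₀ →
      Even C.verts.ncard ∧ CycleSig M C (fun s => s % 4 = C.verts.ncard % 4)) ∧
  (∃ (Cq : M.graph.Subgraph) (x : V), IsPendantCycle M.graph Cq x ∧ Even Cq.verts.ncard ∧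
    ∃ S : Set ↥(Cq.vertsᶜ ∪ {x}),
      PendantReaches (M.induce (Cq.vertsᶜ ∪ {x})).graph S ∧
      NoPendantIn (M.induce (Cq.vertsᶜ ∪ {x})).graph S ∧
      IsDisjointUnionEvenCyclesOddCycleEvenSig
        ((M.induce (Cq.vertsᶜ ∪ {x})).induce S)
        (cyclomatic (M.induce (Cq.vertsᶜ ∪ {x})).graph))

/-- The family 𝔉₂ = 𝔉₀ ∪ 𝔜₁ ∪ 𝔜₂ together with the mixed odd cycles of even signature. -/
def MemF2 [Fintype V] [DecidableEq V] (M : MixedGraph V) : Prop :=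
  MemF0 M ∨ MemY1 M ∨ MemY2 M ∨
    (IsCycleMG M ∧ Odd (Nat.card V) ∧ CycleSig M ⊤ Even)

/-- A connected component that is either an even cycle C̃_q with σ ≡ q (mod 4),
or an isolated vertex. -/
def GoodOtherComp (M : MixedGraph V) : Prop :=
  (IsCycleMG M ∧ Even (Nat.card V) ∧
    CycleSig M ⊤ (fun s => s % 4 = (Nat.card V) % 4)) ∨
  Nat.card V = 1

/-- A fractional matching of `G`, given as a weight function on `Sym2 V` vanishing
outside the edge set. -/
def IsFracMatching [Fintype V] [DecidableEq V] (G : SimpleGraph V) (f : Sym2 V → ℝ) : Prop :=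
  (∀ e ∈ G.edgeSet, 0 ≤ f e ∧ f e ≤ 1) ∧ (∀ e, e ∉ G.edgeSet → f e = 0) ∧
    ∀ v : V, ∑ e ∈ Finset.univ.filter (fun e : Sym2 V => v ∈ e), f e ≤ 1

/-- The fractional matching number m*(G). -/
noncomputable def fracMatchingNumber [Fintype V] [DecidableEq V] (G : SimpleGraph V) : ℝ :=
  sSup {x : ℝ | ∃ f : Sym2 V → ℝ, IsFracMatching G f ∧ ∑ e : Sym2 V, f e = x}

/-- Membership in the family ℱ : fractional matchings of total weight m*(G) taking
values in {0, 1/2, 1}. -/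
def InOptFamily [Fintype V] [DecidableEq V] (G : SimpleGraph V) (f : Sym2 V → ℝ) : Prop :=
  IsFracMatching G f ∧ (∑ e : Sym2 V, f e) = fracMatchingNumber G ∧
    ∀ e : Sym2 V, f e = 0 ∨ f e = 1 / 2 ∨ f e = 1

/-- An optimal fractional matching: a member of ℱ with the largest number of
edges of weight 1. -/
def IsOptFracMatching [Fintype V] [DecidableEq V] (G : SimpleGraph V) (f : Sym2 V → ℝ) : Prop :=
  InOptFamily G f ∧
    ∀ g : Sym2 V → ℝ, InOptFamily G g →
      {e : Sym2 V | g e = 1}.ncard ≤ {e : Sym2 V | f e = 1}.ncard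

/-- E₁(C) : the edges of `G` with exactly one endpoint on the cycle `C`. -/
def cutEdges (G : SimpleGraph V) (C : G.Subgraph) : Set (Sym2 V) :=
  {e | e ∈ G.edgeSet ∧ ∃ a b : V, e = s(a, b) ∧ a ∈ C.verts ∧ b ∉ C.verts}


/-- Theta structure. -/
structure Theta {V : Type u} (G : SimpleGraph V) (a b : V) (W : Fin 3 → G.Walk a b) : Prop where
  path : ∀ j, (W j).IsPath
  pos : ∀ j, 1 ≤ (W j).length
  two : ∀ j, j ≠ 0 → 2 ≤ (W j).length
  cover : ∀ v, ∃ j, v ∈ (W j).support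
  edge : ∀ e ∈ G.edgeSet, ∃ j, e ∈ (W j).edges
  disj : ∀ j j', j ≠ j' → ∀ v, v ∈ (W j).support → v ∈ (W j').support → v = a ∨ v = b

section
variable {V : Type u} {G : SimpleGraph V} {a b : V} {W : Fin 3 → G.Walk a b}

theorem Theta.inj_same (T : Theta G a b W) (j : Fin 3) {i i' : ℕ} (hi : i ≤ (W j).length)
    (hi' : i' ≤ (W j).length) (h : (W j).getVert i = (W j).getVert i') : i = i' :=
  (T.path j).getVert_injOn hi hi' h

theorem Theta.inj (T : Theta G a b W) {j j' : Fin 3} {i i' : ℕ} (hi : i ≤ (W j).length)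
    (hi' : i' ≤ (W j').length) (h : (W j).getVert i = (W j').getVert i') :
    (j = j' ∧ i = i') ∨ (i = 0 ∧ i' = 0) ∨ (i = (W j).length ∧ i' = (W j').length) := by
  by_cases hj : j = j'
  · subst hj
    exact Or.inl ⟨rfl, T.inj_same j hi hi' h⟩
  · right
    rcases T.disj j j' hj ((W j).getVert i) ((W j).getVert_mem_support i)
      (h ▸ (W j').getVert_mem_support i') with h1 | h1
    · left
      refine ⟨T.inj_same j hi (Nat.zero_le _) (by simp [h1]), T.inj_same j' hi' (Nat.zero_le _) (by simp [← h, h1])⟩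
    · right
      refine ⟨T.inj_same j hi le_rfl (by simp [h1]), T.inj_same j' hi' le_rfl (by simp [← h, h1])⟩

theorem Theta.covers (T : Theta G a b W) (v : V) :
    ∃ j i, i ≤ (W j).length ∧ (W j).getVert i = v := by
  obtain ⟨j, hj⟩ := T.cover v
  obtain ⟨i, h1, h2⟩ := SimpleGraph.Walk.mem_support_iff_exists_getVert.1 hj
  exact ⟨j, i, h2, h1⟩

theorem mem_edges_iff (w : G.Walk a b) (x y : V) : s(x, y) ∈ w.edges ↔
    ∃ i < w.length, (x = w.getVert i ∧ y = w.getVert (i+1)) ∨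
      (x = w.getVert (i+1) ∧ y = w.getVert i) := by
  rw [← SimpleGraph.Walk.adj_toSubgraph_iff_mem_edges, SimpleGraph.Walk.toSubgraph_adj_iff]
  constructor
  · rintro ⟨i, h, hi⟩
    refine ⟨i, hi, ?_⟩
    rw [Sym2.eq_iff] at h
    grind
  · rintro ⟨i, hi, h⟩
    refine ⟨i, ?_, hi⟩
    rw [Sym2.eq_iff]
    grind

theorem Theta.adj_iff (T : Theta G a b W) (x y : V) : G.Adj x y ↔
    ∃ j, ∃ i < (W j).length, (x = (W j).getVert i ∧ y = (W j).getVert (i+1)) ∨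
      (x = (W j).getVert (i+1) ∧ y = (W j).getVert i) := by
  constructor
  · intro h
    obtain ⟨j, hj⟩ := T.edge s(x, y) h
    exact ⟨j, (mem_edges_iff _ _ _).1 hj⟩
  · rintro ⟨j, h⟩
    exact (W j).adj_of_mem_edges ((mem_edges_iff _ _ _).2 h)

theorem Theta.extend (T : Theta G a b W) {α : Type*} (val : Fin 3 → ℕ → α)
    (h0 : ∀ j j', val j 0 = val j' 0)
    (h1 : ∀ j j', val j (W j).length = val j' (W j').length) :
    ∃ f : V → α, ∀ j i, i ≤ (W j).length → f ((W j).getVert i) = val j i := by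
  choose J I hI hv using T.covers
  refine ⟨fun v => val (J v) (I v), fun j i hi => ?_⟩
  rcases T.inj (hI _) hi (hv ((W j).getVert i)) with ⟨h2, h3⟩ | ⟨h2, h3⟩ | ⟨h2, h3⟩
  · show val _ _ = _
    rw [h2, h3]
  · show val _ _ = _
    rw [h2, h3]; exact h0 _ _
  · show val _ _ = _
    rw [h2, h3]; exact h1 _ _

/-- neighbours of an interior vertex -/
theorem Theta.adj_int (T : Theta G a b W) {j : Fin 3} {i : ℕ} (hi : i + 1 < (W j).length) (y : V) :
    G.Adj ((W j).getVert (i+1)) y ↔ y = (W j).getVert i ∨ y = (W j).getVert (i+2) := by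
  rw [T.adj_iff]
  constructor
  · rintro ⟨j', i', hi', ⟨h1, h2⟩ | ⟨h1, h2⟩⟩
    · rcases T.inj (by omega) (by omega) h1 with ⟨rfl, h⟩ | ⟨h, h'⟩ | ⟨h, h'⟩
      · subst h; exact Or.inr h2
      · omega
      · omega
    · rcases T.inj (by omega) (by omega) h1 with ⟨rfl, h⟩ | ⟨h, h'⟩ | ⟨h, h'⟩
      · obtain rfl : i = i' := by omega
        exact Or.inl h2
      · omega
      · omega
  · rintro (h | h)
    · exact ⟨j, i, by omega, Or.inr ⟨rfl, h⟩⟩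
    · exact ⟨j, i+1, by omega, Or.inl ⟨rfl, h⟩⟩

theorem Theta.adj_start (T : Theta G a b W) (y : V) :
    G.Adj a y ↔ ∃ j, y = (W j).getVert 1 := by
  rw [T.adj_iff]
  constructor
  · rintro ⟨j', i', hi', ⟨h1, h2⟩ | ⟨h1, h2⟩⟩
    · have := T.inj_same j' (Nat.zero_le _) (by omega) ((W j').getVert_zero.trans h1)
      subst this
      exact ⟨j', h2⟩
    · have := T.inj_same j' (Nat.zero_le _) (by omega) ((W j').getVert_zero.trans h1)
      omega
  · rintro ⟨j, h⟩
    exact ⟨j, 0, T.pos j, Or.inl ⟨by simp, h⟩⟩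

theorem Theta.adj_end (T : Theta G a b W) (y : V) :
    G.Adj b y ↔ ∃ j, y = (W j).getVert ((W j).length - 1) := by
  rw [T.adj_iff]
  constructor
  · rintro ⟨j', i', hi', ⟨h1, h2⟩ | ⟨h1, h2⟩⟩
    · have := T.inj_same j' le_rfl (by omega) ((W j').getVert_length.trans h1)
      omega
    · have := T.inj_same j' le_rfl (by omega) ((W j').getVert_length.trans h1)
      refine ⟨j', ?_⟩
      rw [h2]; congr 1; omega
  · rintro ⟨j, h⟩
    have := T.pos j
    refine ⟨j, (W j).length - 1, by omega, Or.inr ⟨?_, h⟩⟩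
    rw [Nat.sub_add_cancel this]; simp

theorem Theta.first_inj (T : Theta G a b W) {j j' : Fin 3}
    (h : (W j).getVert 1 = (W j').getVert 1) : j = j' := by
  rcases T.inj (T.pos j) (T.pos j') h with ⟨rfl, h⟩ | ⟨h, h'⟩ | ⟨h, h'⟩
  · rfl
  · omega
  · have h1 := T.two j
    have h2 := T.two j'
    by_contra hne
    by_cases hj : j = 0
    · have := h2 (by rintro rfl; exact hne hj)
      omega
    · have := h1 hj
      omega

theorem Theta.last_inj (T : Theta G a b W) {j j' : Fin 3}
    (h : (W j).getVert ((W j).length - 1) = (W j').getVert ((W j').length - 1)) : j = j' := by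
  have p1 := T.pos j
  have p2 := T.pos j'
  rcases T.inj (by omega) (by omega) h with ⟨rfl, h⟩ | ⟨h, h'⟩ | ⟨h, h'⟩
  · rfl
  · have h1 := T.two j
    have h2 := T.two j'
    by_contra hne
    by_cases hj : j = 0
    · have := h2 (by rintro rfl; exact hne hj)
      omega
    · have := h1 hj
      omega
  · omega

theorem Theta.edge_unique (T : Theta G a b W) {j j' : Fin 3} {e : Sym2 V}
    (h : e ∈ (W j).edges) (h' : e ∈ (W j').edges) : j = j' := by
  induction e using Sym2.ind with | _ x y =>
  rw [mem_edges_iff] at h h'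
  obtain ⟨i, hi, h⟩ := h
  obtain ⟨i', hi', h'⟩ := h'
  by_contra hne
  have h1 := T.two j
  have h2 := T.two j'
  have h3 : 2 ≤ (W j).length ∨ 2 ≤ (W j').length := by
    by_cases hj : j = 0
    · exact Or.inr (h2 (by rintro rfl; exact hne hj))
    · exact Or.inl (h1 hj)
  rcases h with ⟨rfl, rfl⟩ | ⟨rfl, rfl⟩ <;> rcases h' with ⟨h4, h5⟩ | ⟨h4, h5⟩ <;>
  · have A := T.inj (by omega) (by omega) h4
    have B := T.inj (by omega) (by omega) h5
    omega

/-! ### Perfect matching -/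
theorem Theta.exists_matching (T : Theta G a b W) (h0 : Odd (W 0).length)
    (h1 : Even (W 1).length) (h2 : Even (W 2).length) :
    ∃ N : G.Subgraph, N.IsPerfectMatching := by
  let c : Fin 3 → ℕ := fun j => if j = 1 then 0 else 1
  have c0 : c 0 = 1 := rfl
  have c1 : c 1 = 0 := rfl
  have c2 : c 2 = 1 := rfl
  let R : V → V → Prop := fun x y => ∃ j, ∃ i < (W j).length, i % 2 = c j ∧
    ((x = (W j).getVert i ∧ y = (W j).getVert (i+1)) ∨
      (x = (W j).getVert (i+1) ∧ y = (W j).getVert i))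
  have hsymm : ∀ x y, R x y → R y x := by
    rintro x y ⟨j, i, hi, hc, h⟩
    exact ⟨j, i, hi, hc, h.symm.imp And.symm And.symm⟩
  let N : G.Subgraph :=
    { verts := Set.univ
      Adj := R
      adj_sub := by
        rintro x y ⟨j, i, hi, hc, h⟩
        exact (T.adj_iff x y).2 ⟨j, i, hi, h⟩
      edge_vert := fun _ => Set.mem_univ _
      symm := ⟨hsymm⟩ }
  refine ⟨N, SimpleGraph.Subgraph.isPerfectMatching_iff.2 fun v => ?_⟩
  change ∃! w, R v w
  have hk : ∀ j, (j = 0 ∧ (W j).length % 2 = 1 ∧ c j = 1) ∨ (j = 1 ∧ (W j).length % 2 = 0 ∧ c j = 0) ∨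
     (j = 2 ∧ (W j).length % 2 = 0 ∧ c j = 1) := by
    intro j
    fin_cases j
    · exact Or.inl ⟨rfl, Nat.odd_iff.1 h0, rfl⟩
    · exact Or.inr (Or.inl ⟨rfl, Nat.even_iff.1 h1, rfl⟩)
    · exact Or.inr (Or.inr ⟨rfl, Nat.even_iff.1 h2, rfl⟩)
  -- uniqueness
  have huniq : ∀ x y z, R x y → R x z → y = z := by
    rintro x y z ⟨j, i, hi, hc, h⟩ ⟨j', i', hi', hc', h'⟩
    have K := hk j
    have K' := hk j'
    have key : j = j' ∧ i = i' := by
      rcases h with ⟨rfl, rfl⟩ | ⟨rfl, rfl⟩ <;> rcases h' with ⟨h4, h5⟩ | ⟨h4, h5⟩ <;>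
      · have A := T.inj (by omega) (by omega) h4
        rcases A with A | A | A
        · omega
        · rcases K with ⟨rfl, _, _⟩ | ⟨rfl, _, _⟩ | ⟨rfl, _, _⟩ <;>
          rcases K' with ⟨rfl, _, _⟩ | ⟨rfl, _, _⟩ | ⟨rfl, _, _⟩ <;> omega
        · rcases K with ⟨rfl, _, _⟩ | ⟨rfl, _, _⟩ | ⟨rfl, _, _⟩ <;>
          rcases K' with ⟨rfl, _, _⟩ | ⟨rfl, _, _⟩ | ⟨rfl, _, _⟩ <;> omega
    obtain ⟨rfl, rfl⟩ := key
    rcases h with ⟨rfl, rfl⟩ | ⟨rfl, rfl⟩ <;> rcases h' with ⟨h4, h5⟩ | ⟨h4, h5⟩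
    · exact h5.symm
    · have A := T.inj_same _ (by omega) (by omega) h4
      omega
    · have A := T.inj_same _ (by omega) (by omega) h4
      omega
    · exact h5.symm
  have hex : ∃ w, R v w := by
    obtain ⟨j, i, hi, rfl⟩ := T.covers v
    by_cases ha : i = 0
    · subst ha
      refine ⟨(W 1).getVert 1, 1, 0, by have := T.pos 1; omega, rfl, Or.inl ⟨by simp, rfl⟩⟩
    by_cases hb : i = (W j).length
    · subst hb
      have := T.pos 2
      have K := hk 2
      refine ⟨(W 2).getVert ((W 2).length - 1), 2, (W 2).length - 1, by omega, by omega, Or.inr ⟨?_, rfl⟩⟩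
      rw [Nat.sub_add_cancel this]; simp
    by_cases hc : i % 2 = c j
    · exact ⟨_, j, i, by omega, hc, Or.inl ⟨rfl, rfl⟩⟩
    · have K := hk j
      refine ⟨(W j).getVert (i - 1), j, i-1, by omega, by omega, Or.inr ⟨?_, rfl⟩⟩
      rw [Nat.sub_add_cancel (by omega)]
  obtain ⟨w, hw⟩ := hex
  exact ⟨w, hw, fun y hy => huniq _ _ _ hy hw⟩

theorem matching_card [Fintype V] (N : G.Subgraph) (h : N.IsMatching) :
    2 * N.edgeSet.ncard = N.verts.ncard := by
  have h1 := SimpleGraph.Subgraph.isMatching_iff_forall_degree.1 h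
  have h2 := N.coe.sum_degrees_eq_twice_card_edges
  have h3 : ∀ v [Fintype (N.coe.neighborSet v)], N.coe.degree v = 1 := by
    intro v _
    rw [← h1 v v.2, ← SimpleGraph.Subgraph.coe_degree]
  have h4 : N.edgeSet.ncard = N.coe.edgeFinset.card := by
    rw [← SimpleGraph.Subgraph.image_coe_edgeSet_coe, Set.ncard_image_of_injective,
      ← SimpleGraph.coe_edgeFinset, Set.ncard_coe_finset]
    exact Sym2.map.injective Subtype.val_injective
  rw [h4, ← h2]
  refine (Finset.sum_congr (g := fun _ => 1) rfl ?_).trans ?_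
  · intro v _
    exact @h3 v (Subtype.fintype (Membership.mem (N.coe.neighborSet v)))
  simp only [Finset.sum_const, Finset.card_univ, smul_eq_mul, mul_one]
  rw [← Nat.card_coe_set_eq, Nat.card_eq_fintype_card]

theorem Theta.matchingNumber_eq [Fintype V] (T : Theta G a b W) (h0 : Odd (W 0).length)
    (h1 : Even (W 1).length) (h2 : Even (W 2).length) :
    2 * matchingNumber G = Fintype.card V := by
  obtain ⟨N, hN⟩ := T.exists_matching h0 h1 h2
  have e1 := matching_card N hN.1
  have e2 : N.verts.ncard = Fintype.card V := by
    rw [hN.2.verts_eq_univ, Set.ncard_univ, Nat.card_eq_fintype_card]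
  have : IsGreatest {k | ∃ N : G.Subgraph, N.IsMatching ∧ N.edgeSet.ncard = k} N.edgeSet.ncard := by
    refine ⟨⟨N, hN.1, rfl⟩, ?_⟩
    rintro k ⟨N', hN', rfl⟩
    have e3 := matching_card N' hN'
    have e4 : N'.verts.ncard ≤ Fintype.card V := by
      rw [← Nat.card_eq_fintype_card]
      exact Set.ncard_le_card _
    omega
  rw [matchingNumber, this.csSup_eq]
  omega
end
section
variable {V : Type u} {G : SimpleGraph V} {a b : V} {W : Fin 3 → G.Walk a b}

/-- The cycle formed by two of the three paths. -/
def cyc (W : Fin 3 → G.Walk a b) (j j' : Fin 3) : G.Walk a a := (W j).append (W j').reverse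

theorem mem_cyc_edges (j j' : Fin 3) (e : Sym2 V) :
    e ∈ (cyc W j j').edges ↔ e ∈ (W j).edges ∨ e ∈ (W j').edges := by
  simp [cyc, SimpleGraph.Walk.edges_append, SimpleGraph.Walk.edges_reverse]

theorem Theta.isCycle (T : Theta G a b W) {j j' : Fin 3} (hne : j ≠ j') :
    (cyc W j j').IsCycle := by
  rw [SimpleGraph.Walk.isCycle_def]
  refine ⟨?_, ?_, ?_⟩
  · rw [SimpleGraph.Walk.isTrail_def, cyc, SimpleGraph.Walk.edges_append,
      SimpleGraph.Walk.edges_reverse, List.nodup_append]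
    refine ⟨(T.path j).isTrail.edges_nodup, List.nodup_reverse.2 (T.path j').isTrail.edges_nodup, ?_⟩
    rintro e he e' he' rfl
    exact hne (T.edge_unique he (List.mem_reverse.1 he'))
  · intro h
    have h1 := congrArg SimpleGraph.Walk.length h
    have := T.pos j
    rw [cyc, SimpleGraph.Walk.length_append, SimpleGraph.Walk.length_nil] at h1
    omega
  · rw [cyc, SimpleGraph.Walk.tail_support_append, List.nodup_append]
    have n1 := (T.path j).support_nodup
    have n2 := (T.path j').reverse.support_nodup
    refine ⟨n1.tail, n2.tail, ?_⟩
    rintro v hv v' hv' rfl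
    have m1 := List.mem_of_mem_tail hv
    have m2 := List.mem_of_mem_tail hv'
    rw [SimpleGraph.Walk.support_reverse, List.mem_reverse] at m2
    rw [← SimpleGraph.Walk.cons_tail_support, List.nodup_cons] at n1 n2
    rcases T.disj j j' hne v m1 m2 with rfl | rfl
    · exact n1.1 hv
    · exact n2.1 hv'

theorem cycle_isCycleSubgraph {u : V} {w : G.Walk u u} (hw : w.IsCycle) :
    IsCycleSubgraph w.toSubgraph := by
  refine ⟨w.toSubgraph_connected, fun v hv => ?_⟩
  exact hw.ncard_neighborSet_toSubgraph_eq_two (w.mem_verts_toSubgraph.1 hv)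

theorem cycle_ncard {u : V} {w : G.Walk u u} (hw : w.IsCycle) :
    w.toSubgraph.verts.ncard = w.length := by
  have h : w.toSubgraph.verts = (w.support.tail.toFinset : Set V) := by
    ext v
    rw [w.mem_verts_toSubgraph, List.coe_toFinset]
    constructor
    · intro hv
      rw [← SimpleGraph.Walk.cons_tail_support, List.mem_cons] at hv
      rcases hv with rfl | hv
      · exact SimpleGraph.Walk.end_mem_tail_support hw.not_nil
      · exact hv
    · exact fun hv => List.mem_of_mem_tail hv
  rw [h, Set.ncard_coe_finset, List.toFinset_card_of_nodup hw.support_nodup]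
  simp

theorem Theta.cyc_ncard (T : Theta G a b W) {j j' : Fin 3} (hne : j ≠ j') :
    (cyc W j j').toSubgraph.verts.ncard = (W j).length + (W j').length := by
  rw [cycle_ncard (T.isCycle hne)]
  simp [cyc]

theorem IsCycleSubgraph.mem_verts {C : G.Subgraph} (hC : IsCycleSubgraph C) (v : V) :
    v ∈ C.verts ↔ ∃ w, C.Adj v w := by
  constructor
  · intro hv
    have h := hC.2 v hv
    have : {w | C.Adj v w}.Nonempty := by
      rw [Set.nonempty_iff_ne_empty]
      intro h'
      rw [h', Set.ncard_empty] at h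
      omega
    exact this
  · rintro ⟨w, h⟩
    exact C.edge_vert h

theorem IsCycleSubgraph.ext {C D : G.Subgraph} (hC : IsCycleSubgraph C) (hD : IsCycleSubgraph D)
    (h : ∀ x y, C.Adj x y ↔ D.Adj x y) : C = D := by
  apply SimpleGraph.Subgraph.ext
  · ext v
    rw [hC.mem_verts, hD.mem_verts]
    simp [h]
  · ext x y
    exact h x y

theorem Theta.cycle_step (T : Theta G a b W) {C : G.Subgraph} (hC : IsCycleSubgraph C)
    {j : Fin 3} {i : ℕ} (hi : i + 1 < (W j).length) :
    C.Adj ((W j).getVert i) ((W j).getVert (i+1)) ↔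
      C.Adj ((W j).getVert (i+1)) ((W j).getVert (i+2)) := by
  have key : (W j).getVert (i+1) ∈ C.verts →
      C.Adj ((W j).getVert (i+1)) ((W j).getVert i) ∧
      C.Adj ((W j).getVert (i+1)) ((W j).getVert (i+2)) := by
    intro hv
    have h := hC.2 _ hv
    have hsub : {w | C.Adj ((W j).getVert (i+1)) w} ⊆ {(W j).getVert i, (W j).getVert (i+2)} := by
      intro w hw
      exact (T.adj_int hi w).1 (C.adj_sub hw)
    have heq := Set.eq_of_subset_of_ncard_le hsub (by
      rw [h]
      exact (Set.ncard_insert_le _ _).trans (by simp)) (Set.toFinite _)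
    constructor
    · have : (W j).getVert i ∈ {w | C.Adj ((W j).getVert (i+1)) w} := by rw [heq]; simp
      exact this
    · have : (W j).getVert (i+2) ∈ {w | C.Adj ((W j).getVert (i+1)) w} := by rw [heq]; simp
      exact this
  constructor
  · intro h
    exact (key (C.edge_vert h.symm)).2
  · intro h
    exact (key (C.edge_vert h)).1.symm

theorem Theta.cycle_full (T : Theta G a b W) {C : G.Subgraph} (hC : IsCycleSubgraph C)
    {j : Fin 3} {i : ℕ} (hi : i < (W j).length) :
    C.Adj ((W j).getVert i) ((W j).getVert (i+1)) ↔ C.Adj a ((W j).getVert 1) := by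
  induction i with
  | zero => simp
  | succ i ih =>
    rw [← ih (by omega), ← T.cycle_step hC (by omega)]

theorem Theta.cycle_adj (T : Theta G a b W) {C : G.Subgraph} (hC : IsCycleSubgraph C) (x y : V) :
    C.Adj x y ↔ ∃ j, C.Adj a ((W j).getVert 1) ∧ s(x, y) ∈ (W j).edges := by
  constructor
  · intro h
    obtain ⟨j, hj⟩ := T.edge s(x, y) (C.adj_sub h)
    refine ⟨j, ?_, hj⟩
    obtain ⟨i, hi, ⟨rfl, rfl⟩ | ⟨rfl, rfl⟩⟩ := (mem_edges_iff _ _ _).1 hj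
    · exact (T.cycle_full hC hi).1 h
    · exact (T.cycle_full hC hi).1 h.symm
  · rintro ⟨j, h, hj⟩
    obtain ⟨i, hi, ⟨rfl, rfl⟩ | ⟨rfl, rfl⟩⟩ := (mem_edges_iff _ _ _).1 hj
    · exact (T.cycle_full hC hi).2 h
    · exact ((T.cycle_full hC hi).2 h).symm

theorem fin3_aux : ∀ s : Finset (Fin 3), s.card = 2 → s = {0, 1} ∨ s = {0, 2} ∨ s = {1, 2} := by
  decide

theorem Theta.classify (T : Theta G a b W) {C : G.Subgraph} (hC : IsCycleSubgraph C) :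
    C = (cyc W 0 1).toSubgraph ∨ C = (cyc W 0 2).toSubgraph ∨ C = (cyc W 1 2).toSubgraph := by
  let s : Finset (Fin 3) := Finset.univ.filter fun j => C.Adj a ((W j).getVert 1)
  have hs : ∀ j, j ∈ s ↔ C.Adj a ((W j).getVert 1) := by simp [s]
  have hmem : a ∈ C.verts := by
    obtain ⟨v, hv⟩ := hC.1.nonempty
    obtain ⟨w, hw⟩ := (hC.mem_verts v).1 hv
    obtain ⟨j, hj, _⟩ := (T.cycle_adj hC _ _).1 hw
    exact C.edge_vert hj
  have hcard : s.card = 2 := by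
    rw [← hC.2 a hmem]
    have : {w | C.Adj a w} = (fun j => (W j).getVert 1) '' (s : Set (Fin 3)) := by
      ext w
      simp only [Set.mem_ofPred_eq, Set.mem_image, Finset.mem_coe]
      constructor
      · intro h
        obtain ⟨j, rfl⟩ := (T.adj_start w).1 (C.adj_sub h)
        exact ⟨j, (hs j).2 h, rfl⟩
      · rintro ⟨j, hj, rfl⟩
        exact (hs j).1 hj
    rw [this, Set.ncard_image_of_injective _ (fun _ _ h => T.first_inj h), Set.ncard_coe_finset]
  have key : ∀ j j' : Fin 3, j ≠ j' → s = {j, j'} → C = (cyc W j j').toSubgraph := by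
    intro j j' hne hsj
    refine hC.ext (cycle_isCycleSubgraph (T.isCycle hne)) fun x y => ?_
    rw [T.cycle_adj hC, SimpleGraph.Walk.adj_toSubgraph_iff_mem_edges, mem_cyc_edges]
    simp only [← hs, hsj]
    simp
  rcases fin3_aux s hcard with h | h | h
  · exact Or.inl (key _ _ (by decide) h)
  · exact Or.inr (Or.inl (key _ _ (by decide) h))
  · exact Or.inr (Or.inr (key _ _ (by decide) h))

theorem Theta.evenCycleCount_eq (T : Theta G a b W) (h0 : Odd (W 0).length)
    (h1 : Even (W 1).length) (h2 : Even (W 2).length) : evenCycleCount G = 1 := by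
  rw [evenCycleCount, Set.ncard_eq_one]
  refine ⟨(cyc W 1 2).toSubgraph, ?_⟩
  ext C
  simp only [Set.mem_ofPred_eq, Set.mem_singleton_iff]
  constructor
  · rintro ⟨hC, he⟩
    rcases T.classify hC with rfl | rfl | rfl
    · rw [T.cyc_ncard (by decide)] at he
      grind
    · rw [T.cyc_ncard (by decide)] at he
      grind
    · rfl
  · rintro rfl
    refine ⟨cycle_isCycleSubgraph (T.isCycle (by decide)), ?_⟩
    rw [T.cyc_ncard (by decide)]
    exact h1.add h2
end

/-! ### Signatures -/
section
variable {V : Type u}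

/-- Signed arc indicator. -/
def phi (M : MixedGraph V) (x y : V) : ℤ :=
  if M.arc x y then 1 else if M.arc y x then -1 else 0

theorem phi_antisymm (M : MixedGraph V) (x y : V) : phi M y x = - phi M x y := by
  have := M.arc_antisymm x y
  unfold phi
  split_ifs <;> simp_all

/-- Partial sums of the signed arcs along a walk. -/
def pot (M : MixedGraph V) {a b : V} (w : M.graph.Walk a b) (i : ℕ) : ℤ :=
  ∑ t ∈ Finset.range i, phi M (w.getVert t) (w.getVert (t+1))

theorem walkSignature_eq (M : MixedGraph V) {x : V} (w : M.graph.Walk x x) :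
    walkSignature M w = ((w.darts.map fun d => phi M d.toProd.1 d.toProd.2).sum).natAbs := by
  unfold walkSignature
  congr 1
  generalize w.darts = L
  induction L with
  | nil => simp
  | cons d L ih =>
    rw [List.map_cons, List.sum_cons, ← ih, List.countP_cons, List.countP_cons]
    have := M.arc_antisymm d.toProd.1 d.toProd.2
    unfold phi
    push_cast
    split_ifs <;> simp_all <;> omega

theorem telescope {G : SimpleGraph V} (g : V → ℤ) {x y : V} (w : G.Walk x y) :
    (w.darts.map fun d => g d.toProd.2 - g d.toProd.1).sum = g y - g x := by
  induction w with
  | nil => simp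
  | cons h p ih =>
    simp only [SimpleGraph.Walk.darts_cons, List.map_cons, List.sum_cons, ih]
    ring

theorem sum_single {G : SimpleGraph V} (δ : G.Dart → ℤ) (e : Sym2 V) (D : ℕ) (L : List G.Dart)
    (hn : (L.map SimpleGraph.Dart.edge).Nodup)
    (h0 : ∀ d ∈ L, d.edge ≠ e → δ d = 0) (h1 : ∀ d ∈ L, d.edge = e → (δ d).natAbs = D) :
    (e ∉ L.map SimpleGraph.Dart.edge → (L.map δ).sum = 0) ∧
    (e ∈ L.map SimpleGraph.Dart.edge → ((L.map δ).sum).natAbs = D) := by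
  induction L with
  | nil => simp
  | cons d L ih =>
    rw [List.map_cons, List.nodup_cons] at hn
    have ih := ih hn.2 (fun d hd => h0 d (by simp [hd])) (fun d hd => h1 d (by simp [hd]))
    simp only [List.map_cons, List.sum_cons, List.mem_cons, not_or]
    constructor
    · rintro ⟨h2, h3⟩
      rw [ih.1 h3, h0 d (by simp) (Ne.symm h2)]
      rfl
    · intro h
      by_cases hd : d.edge = e
      · rw [ih.1 (hd ▸ hn.1), add_zero]
        exact h1 d (by simp) hd
      · rw [h0 d (by simp) hd, zero_add]
        exact ih.2 (h.resolve_left (Ne.symm hd))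

theorem Theta.sig_eq {M : MixedGraph V} {a b : V} {W : Fin 3 → M.graph.Walk a b}
    (T : Theta M.graph a b W) {j j' : Fin 3} (hne : j ≠ j') {x : V} (w : M.graph.Walk x x)
    (hw : w.IsCycle) (he : ∀ e, e ∈ w.edges ↔ e ∈ (W j).edges ∨ e ∈ (W j').edges) :
    walkSignature M w = (pot M (W j) (W j).length - pot M (W j') (W j').length).natAbs := by
  obtain ⟨g, hg⟩ := T.extend (fun t i => if i = (W t).length then pot M (W j) (W j).length
    else pot M (W t) i) (by
      intro s t
      have := T.pos s
      have := T.pos t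
      rw [if_neg (by omega), if_neg (by omega)]
      simp [pot]) (by simp)
  let δ : M.graph.Dart → ℤ := fun d =>
    phi M d.toProd.1 d.toProd.2 - (g d.toProd.2 - g d.toProd.1)
  have hsum : (w.darts.map fun d => phi M d.toProd.1 d.toProd.2).sum = (w.darts.map δ).sum := by
    have := telescope g w
    rw [sub_self] at this
    have h2 : ∀ L : List M.graph.Dart, (L.map δ).sum =
        (L.map fun d => phi M d.toProd.1 d.toProd.2).sum -
        (L.map fun d => g d.toProd.2 - g d.toProd.1).sum := by
      intro L
      induction L with
      | nil => simp
      | cons d L ih =>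
        simp only [List.map_cons, List.sum_cons, ih]
        simp only [δ]
        ring
    rw [h2, this, sub_zero]
  have hstep : ∀ t i, pot M (W t) (i+1) - pot M (W t) i =
      phi M ((W t).getVert i) ((W t).getVert (i+1)) := by
    intro t i
    simp [pot, Finset.sum_range_succ]
  have hlast : ∀ t i, i < (W t).length →
      phi M ((W t).getVert i) ((W t).getVert (i+1)) -
        (g ((W t).getVert (i+1)) - g ((W t).getVert i)) =
      if i + 1 = (W t).length then pot M (W t) (W t).length - pot M (W j) (W j).length else 0 := by
    intro t i hi
    have hni : i ≠ (W t).length := by omega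
    rw [hg t i hi.le, hg t (i+1) hi, ← hstep, if_neg hni]
    split_ifs with h
    · rw [h]; ring
    · ring
  let e : Sym2 V := s((W j').getVert ((W j').length - 1), (W j').getVert ((W j').length - 1 + 1))
  have hpos := T.pos j'
  have hee : e ∈ (W j').edges := (mem_edges_iff _ _ _).2 ⟨_, by omega, Or.inl ⟨rfl, rfl⟩⟩
  have hδ : ∀ d ∈ w.darts, ∃ t, (t = j ∨ t = j') ∧ ∃ i < (W t).length,
      d.edge = s((W t).getVert i, (W t).getVert (i+1)) ∧
      (δ d).natAbs = (if i + 1 = (W t).length then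
        pot M (W t) (W t).length - pot M (W j) (W j).length else 0).natAbs := by
    intro d hd
    have hde : d.edge ∈ w.edges := List.mem_map_of_mem hd
    have : ∃ t, (t = j ∨ t = j') ∧ d.edge ∈ (W t).edges := by
      rcases (he _).1 hde with h | h
      · exact ⟨j, Or.inl rfl, h⟩
      · exact ⟨j', Or.inr rfl, h⟩
    obtain ⟨t, ht, hdt⟩ := this
    obtain ⟨i, hi, h⟩ := (mem_edges_iff _ d.toProd.1 d.toProd.2).1 hdt
    refine ⟨t, ht, i, hi, ?_, ?_⟩
    · change s(d.toProd.1, d.toProd.2) = _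
      rcases h with ⟨h1, h2⟩ | ⟨h1, h2⟩
      · rw [h1, h2]
      · rw [h1, h2, Sym2.eq_swap]
    · rw [← hlast t i hi]
      change (phi M d.toProd.1 d.toProd.2 - (g d.toProd.2 - g d.toProd.1)).natAbs = _
      rcases h with ⟨h1, h2⟩ | ⟨h1, h2⟩
      · rw [h1, h2]
      · rw [h1, h2, phi_antisymm, ← Int.natAbs_neg]
        congr 1
        ring
  rw [walkSignature_eq, hsum]
  refine (sum_single δ e _ w.darts hw.isTrail.edges_nodup ?_ ?_).2 ((he e).2 (Or.inr hee))
  · intro d hd hne'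
    obtain ⟨t, ht, i, hi, h1, h2⟩ := hδ d hd
    rw [← Int.natAbs_eq_zero, h2]
    split_ifs with hl
    · rcases ht with rfl | rfl
      · simp
      · exfalso
        apply hne'
        rw [h1]
        obtain rfl : i = (W t).length - 1 := by omega
        rfl
    · rfl
  · intro d hd hde
    obtain ⟨t, ht, i, hi, h1, h2⟩ := hδ d hd
    have hdt : e ∈ (W t).edges := by
      rw [← hde, h1]
      exact (mem_edges_iff _ _ _).2 ⟨_, hi, Or.inl ⟨rfl, rfl⟩⟩
    obtain rfl := T.edge_unique hdt hee
    have hii : i + 1 = (W t).length := by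
      rw [hde] at h1
      have h3 : s((W t).getVert ((W t).length - 1), (W t).getVert ((W t).length - 1 + 1)) =
        s((W t).getVert i, (W t).getVert (i+1)) := h1
      rw [Sym2.eq_iff] at h3
      rcases h3 with ⟨h3, h4⟩ | ⟨h3, h4⟩
      · have := T.inj_same t (by omega) (by omega) h3
        omega
      · have := T.inj_same t (by omega) (by omega) h3
        have := T.inj_same t (by omega) (by omega) h4
        omega
    rw [h2, if_pos hii, ← Int.natAbs_neg]
    congr 1
    ring

theorem Theta.cycleSig_iff {M : MixedGraph V} {a b : V} {W : Fin 3 → M.graph.Walk a b}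
    (T : Theta M.graph a b W) {j j' : Fin 3} (hne : j ≠ j') (P : ℕ → Prop) :
    CycleSig M (cyc W j j').toSubgraph P ↔
      P (pot M (W j) (W j).length - pot M (W j') (W j').length).natAbs := by
  constructor
  · rintro ⟨x, w, hw, _, he, hP⟩
    rwa [T.sig_eq hne w hw] at hP
    intro e
    rw [← mem_cyc_edges, ← (cyc W j j').mem_edges_toSubgraph, ← he]
    rfl
  · intro hP
    refine ⟨a, cyc W j j', T.isCycle hne, ?_, ?_, ?_⟩
    · rw [SimpleGraph.Walk.verts_toSubgraph]
    · ext e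
      rw [SimpleGraph.Walk.mem_edges_toSubgraph]
      rfl
    · rwa [T.sig_eq hne _ (T.isCycle hne) (mem_cyc_edges j j')]
end
set_option linter.unusedSectionVars false
section
variable {V : Type u}

theorem I_zpow_eq_one_iff (m : ℤ) : Complex.I ^ m = 1 ↔ (4 : ℤ) ∣ m := by
  have h4 : Complex.I ^ (4 : ℤ) = 1 := by
    rw [show (4 : ℤ) = ((4 : ℕ) : ℤ) by rfl, zpow_natCast, Complex.I_pow_four]
  have h : Complex.I ^ m = Complex.I ^ (m % 4) := by
    conv_lhs => rw [← Int.mul_ediv_add_emod m 4]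
    rw [zpow_add₀ Complex.I_ne_zero, zpow_mul, h4, one_zpow, one_mul]
  rw [h, Int.dvd_iff_emod_eq_zero]
  have h1 := Int.emod_nonneg m (show (4 : ℤ) ≠ 0 by norm_num)
  have h2 := Int.emod_lt_of_pos m (show (0 : ℤ) < 4 by norm_num)
  generalize m % 4 = r at h1 h2
  have c2 : Complex.I ^ (2 : ℤ) = -1 := by
    rw [show (2 : ℤ) = ((2 : ℕ) : ℤ) by rfl, zpow_natCast, Complex.I_sq]
  have c3 : Complex.I ^ (3 : ℤ) = -Complex.I := by
    rw [show (3 : ℤ) = ((3 : ℕ) : ℤ) by rfl, zpow_natCast, Complex.I_pow_three]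
  interval_cases r
  · simp
  · simp [Complex.ext_iff]
  · rw [c2]; norm_num
  · rw [c3]; simp [Complex.ext_iff]

theorem I_zpow_eq_iff (m n : ℤ) : Complex.I ^ m = Complex.I ^ n ↔ (4 : ℤ) ∣ m - n := by
  rw [← I_zpow_eq_one_iff, zpow_sub₀ Complex.I_ne_zero, div_eq_one_iff_eq]
  exact zpow_ne_zero _ Complex.I_ne_zero

variable [Fintype V] [DecidableEq V]

theorem hMatrix_adj {M : MixedGraph V} {x y : V} (h : M.graph.Adj x y) :
    M.hMatrix x y = Complex.I ^ phi M x y := by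
  unfold MixedGraph.hMatrix phi
  split_ifs <;> simp

theorem hMatrix_not_adj {M : MixedGraph V} {x y : V} (h : ¬ M.graph.Adj x y) :
    M.hMatrix x y = 0 := by
  unfold MixedGraph.hMatrix
  rw [if_neg (fun h' => h (M.arc_adj _ _ h')), if_neg (fun h' => h (M.arc_adj _ _ h').symm),
    if_neg h]

theorem mulVec_of_nbrs {M : MixedGraph V} {ι : Type} [Fintype ι] (g : ι → V)
    (hg : Function.Injective g) (x : V) (h : ∀ y, M.graph.Adj x y ↔ ∃ t, y = g t) (f : V → ℂ) :
    (M.hMatrix.mulVec f) x = ∑ t, Complex.I ^ phi M x (g t) * f (g t) := by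
  rw [Matrix.mulVec, dotProduct]
  have h1 : ∀ t, Complex.I ^ phi M x (g t) * f (g t) = M.hMatrix x (g t) * f (g t) := by
    intro t
    rw [hMatrix_adj ((h _).2 ⟨t, rfl⟩)]
  simp_rw [h1]
  rw [← Finset.sum_image (s := Finset.univ) (g := g) (f := fun y => M.hMatrix x y * f y)
    (fun _ _ _ _ h => hg h)]
  symm
  apply Finset.sum_subset (Finset.subset_univ _)
  intro y _ hy
  rw [hMatrix_not_adj, zero_mul]
  intro h'
  obtain ⟨t, rfl⟩ := (h y).1 h'
  exact hy (by simp)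

variable {M : MixedGraph V} {a b : V} {W : Fin 3 → M.graph.Walk a b}

/-- The gauge exponent. -/
def gexp (M : MixedGraph V) {a b : V} (W : Fin 3 → M.graph.Walk a b) (j : Fin 3) (i : ℕ) : ℤ :=
  (i : ℤ) - pot M (W j) i

theorem pot_succ (w : M.graph.Walk a b) (i : ℕ) :
    phi M (w.getVert i) (w.getVert (i+1)) = pot M w (i+1) - pot M w i := by
  simp [pot, Finset.sum_range_succ]

theorem Theta.mulVec_int (T : Theta M.graph a b W) {j : Fin 3} {i : ℕ} (hi : i + 1 < (W j).length)
    (f : V → ℂ) (F : Fin 3 → ℕ → ℂ)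
    (hF : ∀ j i, i ≤ (W j).length → f ((W j).getVert i) = Complex.I ^ gexp M W j i * F j i) :
    (M.hMatrix.mulVec f) ((W j).getVert (i+1)) =
      Complex.I ^ ((i : ℤ) - pot M (W j) (i+1)) * (F j i - F j (i+2)) := by
  rw [mulVec_of_nbrs (ι := Fin 2) (![(W j).getVert i, (W j).getVert (i+2)]) ?_ _ ?_ f]
  · rw [Fin.sum_univ_two]
    simp only [Matrix.cons_val_zero, Matrix.cons_val_one]
    rw [hF j i (by omega), hF j (i+2) (by omega), phi_antisymm, pot_succ, pot_succ (W j) (i+1),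
      ← mul_assoc, ← mul_assoc, ← zpow_add₀ Complex.I_ne_zero, ← zpow_add₀ Complex.I_ne_zero]
    have e1 : -(pot M (W j) (i + 1) - pot M (W j) i) + gexp M W j i =
      (i : ℤ) - pot M (W j) (i+1) := by unfold gexp; ring
    have e2 : pot M (W j) (i + 1 + 1) - pot M (W j) (i + 1) + gexp M W j (i + 2) =
      ((i : ℤ) - pot M (W j) (i+1)) + 2 := by unfold gexp; push_cast; ring
    rw [e1, e2, zpow_add₀ Complex.I_ne_zero]
    have c2 : Complex.I ^ (2 : ℤ) = -1 := by
      rw [show (2 : ℤ) = ((2 : ℕ) : ℤ) by rfl, zpow_natCast, Complex.I_sq]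
    rw [c2]; ring
  · have hne : (W j).getVert i ≠ (W j).getVert (i+2) := by
      intro h
      have := T.inj_same j (by omega) (by omega) h
      omega
    intro s t
    fin_cases s <;> fin_cases t <;> simp [hne, hne.symm]
  · intro y
    rw [T.adj_int hi, Fin.exists_fin_two]
    simp

theorem Theta.mulVec_start (T : Theta M.graph a b W)
    (f : V → ℂ) (F : Fin 3 → ℕ → ℂ)
    (hF : ∀ j i, i ≤ (W j).length → f ((W j).getVert i) = Complex.I ^ gexp M W j i * F j i) :
    (M.hMatrix.mulVec f) a = Complex.I * (F 0 1 + F 1 1 + F 2 1) := by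
  rw [mulVec_of_nbrs (fun j => (W j).getVert 1) (fun _ _ h => T.first_inj h) _ T.adj_start f]
  have : ∀ j, Complex.I ^ phi M a ((W j).getVert 1) * f ((W j).getVert 1) = Complex.I * F j 1 := by
    intro j
    have h := pot_succ (W j) 0
    rw [SimpleGraph.Walk.getVert_zero] at h
    rw [hF j 1 (T.pos j), h, ← mul_assoc, ← zpow_add₀ Complex.I_ne_zero]
    have : pot M (W j) (0 + 1) - pot M (W j) 0 + gexp M W j 1 = 1 := by
      simp [gexp, pot]
    rw [this, zpow_one]
  simp_rw [this]
  rw [Fin.sum_univ_three]; ring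

theorem Theta.mulVec_end (T : Theta M.graph a b W)
    (f : V → ℂ) (F : Fin 3 → ℕ → ℂ)
    (hF : ∀ j i, i ≤ (W j).length → f ((W j).getVert i) = Complex.I ^ gexp M W j i * F j i) :
    (M.hMatrix.mulVec f) b = Complex.I⁻¹ * (
      Complex.I ^ gexp M W 0 (W 0).length * F 0 ((W 0).length - 1) +
      Complex.I ^ gexp M W 1 (W 1).length * F 1 ((W 1).length - 1) +
      Complex.I ^ gexp M W 2 (W 2).length * F 2 ((W 2).length - 1)) := by
  rw [mulVec_of_nbrs (fun j => (W j).getVert ((W j).length - 1)) (fun _ _ h => T.last_inj h) _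
    T.adj_end f]
  have : ∀ j, Complex.I ^ phi M b ((W j).getVert ((W j).length - 1)) *
      f ((W j).getVert ((W j).length - 1)) =
      Complex.I⁻¹ * (Complex.I ^ gexp M W j (W j).length * F j ((W j).length - 1)) := by
    intro j
    have hp := T.pos j
    have h := pot_succ (W j) ((W j).length - 1)
    rw [Nat.sub_add_cancel hp, SimpleGraph.Walk.getVert_length] at h
    rw [hF j _ (Nat.sub_le _ _), phi_antisymm, h, ← mul_assoc, ← zpow_add₀ Complex.I_ne_zero,
      ← mul_assoc, ← zpow_neg_one, ← zpow_add₀ Complex.I_ne_zero]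
    congr 2
    unfold gexp
    push_cast [hp]
    ring
  simp_rw [this]
  rw [Fin.sum_univ_three]; ring

theorem Theta.ker_parity (T : Theta M.graph a b W) 
    (f : V → ℂ) (F : Fin 3 → ℕ → ℂ)
    (hF : ∀ j i, i ≤ (W j).length → f ((W j).getVert i) = Complex.I ^ gexp M W j i * F j i)
    (hf : M.hMatrix.mulVec f = 0) (j : Fin 3) (i : ℕ) :
    i ≤ (W j).length → F j i = F j (i % 2) := by
  induction i using Nat.strong_induction_on with
  | _ i ih =>
    intro hi
    match i with
    | 0 => rfl
    | 1 => rfl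
    | i + 2 =>
      have h1 := T.mulVec_int (j := j) (i := i) (by omega) f F hF
      rw [hf, Pi.zero_apply, eq_comm, mul_eq_zero] at h1
      have h2 := sub_eq_zero.1 (h1.resolve_left (zpow_ne_zero _ Complex.I_ne_zero))
      rw [← h2, ih i (by omega) (by omega), Nat.add_mod_right]

theorem exists_F (f : V → ℂ) : ∃ F : Fin 3 → ℕ → ℂ,
    ∀ j i, i ≤ (W j).length → f ((W j).getVert i) = Complex.I ^ gexp M W j i * F j i := by
  refine ⟨fun j i => (Complex.I ^ gexp M W j i)⁻¹ * f ((W j).getVert i), fun j i _ => ?_⟩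
  rw [mul_inv_cancel_left₀]
  exact zpow_ne_zero _ Complex.I_ne_zero

theorem gexp_zero (j : Fin 3) : gexp M W j 0 = 0 := by simp [gexp, pot]

/-- Consequences of being in the kernel. -/
theorem Theta.ker_eqs (T : Theta M.graph a b W) (h0 : Odd (W 0).length)
    (h1 : Even (W 1).length) (h2 : Even (W 2).length)
    (f : V → ℂ) (F : Fin 3 → ℕ → ℂ)
    (hF : ∀ j i, i ≤ (W j).length → f ((W j).getVert i) = Complex.I ^ gexp M W j i * F j i)
    (hf : M.hMatrix.mulVec f = 0) :
    (∀ j, F j 0 = f a) ∧ f b = Complex.I ^ gexp M W 0 (W 0).length * F 0 1 ∧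
    f b = Complex.I ^ gexp M W 1 (W 1).length * f a ∧
    f b = Complex.I ^ gexp M W 2 (W 2).length * f a ∧
    F 0 1 + F 1 1 + F 2 1 = 0 ∧
    Complex.I ^ gexp M W 0 (W 0).length * f a + Complex.I ^ gexp M W 1 (W 1).length * F 1 1
      + Complex.I ^ gexp M W 2 (W 2).length * F 2 1 = 0 := by
  have P := T.ker_parity f F hF hf
  have A : ∀ j, F j 0 = f a := by
    intro j
    have := hF j 0 (Nat.zero_le _)
    rw [SimpleGraph.Walk.getVert_zero, gexp_zero, zpow_zero, one_mul] at this
    exact this.symm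
  have B : ∀ j, f b = Complex.I ^ gexp M W j (W j).length * F j ((W j).length % 2) := by
    intro j
    have := hF j _ le_rfl
    rwa [SimpleGraph.Walk.getVert_length, P j _ le_rfl] at this
  have p0 := T.pos 0
  have p1 := T.pos 1
  have p2 := T.pos 2
  rw [Nat.odd_iff] at h0
  rw [Nat.even_iff] at h1 h2
  have hs := T.mulVec_start f F hF
  have he := T.mulVec_end f F hF
  rw [hf, Pi.zero_apply, eq_comm, mul_eq_zero] at hs he
  have hs := hs.resolve_left Complex.I_ne_zero
  have he := he.resolve_left (inv_ne_zero Complex.I_ne_zero)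
  rw [P 0 _ (by omega), P 1 _ (by omega), P 2 _ (by omega),
    show ((W 0).length - 1) % 2 = 0 by omega, show ((W 1).length - 1) % 2 = 1 by omega,
    show ((W 2).length - 1) % 2 = 1 by omega, A] at he
  refine ⟨A, ?_, ?_, ?_, hs, he⟩
  · rw [B 0, h0]
  · rw [B 1, h1, A]
  · rw [B 2, h2, A]

theorem Theta.exists_ker (T : Theta M.graph a b W) (h0 : Odd (W 0).length)
    (h1 : Even (W 1).length) (h2 : Even (W 2).length)
    (e1 : Complex.I ^ gexp M W 1 (W 1).length = Complex.I ^ gexp M W 2 (W 2).length)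
    (e2 : (Complex.I ^ gexp M W 0 (W 0).length) ^ 2 = (Complex.I ^ gexp M W 1 (W 1).length) ^ 2)
    (α β : ℂ) : ∃ f : V → ℂ, M.hMatrix.mulVec f = 0 ∧ f a = α ∧ f ((W 1).getVert 1) = β := by
  set E0 := Complex.I ^ gexp M W 0 (W 0).length with hE0
  set E1 := Complex.I ^ gexp M W 1 (W 1).length with hE1
  have n0 : E0 ≠ 0 := zpow_ne_zero _ Complex.I_ne_zero
  let t1 : ℂ := (Complex.I ^ gexp M W 1 1)⁻¹ * β
  let t0 : ℂ := E1 * α / E0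
  let t : Fin 3 → ℂ := ![t0, t1, -t0 - t1]
  let F : Fin 3 → ℕ → ℂ := fun j i => if i % 2 = 0 then α else t j
  have Fe : ∀ j i, i % 2 = 0 → F j i = α := fun j i h => if_pos h
  have Fo : ∀ j i, i % 2 = 1 → F j i = t j := fun j i h => if_neg (by omega)
  rw [Nat.odd_iff] at h0
  rw [Nat.even_iff] at h1 h2
  have hE : ∀ j, Complex.I ^ gexp M W j (W j).length * F j (W j).length = E1 * α := by
    intro j
    fin_cases j
    · change E0 * F 0 (W 0).length = _
      rw [Fo 0 _ h0]
      change E0 * (E1 * α / E0) = _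
      field_simp
    · change E1 * F 1 (W 1).length = _
      rw [Fe 1 _ h1]
    · change Complex.I ^ gexp M W 2 (W 2).length * F 2 (W 2).length = _
      rw [Fe 2 _ h2, e1]
  obtain ⟨f, hF⟩ := T.extend (fun j i => Complex.I ^ gexp M W j i * F j i)
    (by
      intro j j'
      simp only [gexp_zero, Fe j 0 rfl, Fe j' 0 rfl])
    (by
      intro j j'
      exact (hE j).trans (hE j').symm)
  have p0 := T.pos 0
  have p1 := T.pos 1
  have p2 := T.pos 2
  refine ⟨f, ?_, ?_, ?_⟩
  · funext v
    rw [Pi.zero_apply]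
    obtain ⟨j, i, hi, rfl⟩ := T.covers v
    by_cases hi0 : i = 0
    · subst hi0
      rw [SimpleGraph.Walk.getVert_zero, T.mulVec_start f F hF, Fo 0 1 rfl, Fo 1 1 rfl, Fo 2 1 rfl]
      change Complex.I * (t0 + t1 + (-t0 - t1)) = 0
      ring
    by_cases hi1 : i = (W j).length
    · subst hi1
      rw [SimpleGraph.Walk.getVert_length, T.mulVec_end f F hF, Fe 0 _ (by omega),
        Fo 1 _ (by omega), Fo 2 _ (by omega), ← e1, ← hE0]
      change Complex.I⁻¹ * (E0 * α + E1 * t1 + E1 * (-t0 - t1)) = 0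
      have : E1 * t0 = E0 * α := by
        change E1 * (E1 * α / E0) = _
        field_simp
        rw [e2, mul_comm]
      linear_combination - Complex.I⁻¹ * this
    · obtain ⟨i, rfl⟩ : ∃ i', i = i' + 1 := ⟨i - 1, by omega⟩
      rw [T.mulVec_int (by omega) f F hF]
      have : F j i = F j (i+2) := by
        simp only [F, Nat.add_mod_right]
      rw [this, sub_self, mul_zero]
  · have := hF 0 0 (Nat.zero_le _)
    rw [SimpleGraph.Walk.getVert_zero, gexp_zero, Fe 0 0 rfl] at this
    simpa using this
  · rw [hF 1 1 p1, Fo 1 1 rfl]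
    change _ * ((Complex.I ^ gexp M W 1 1)⁻¹ * β) = β
    rw [mul_inv_cancel_left₀]
    exact zpow_ne_zero _ Complex.I_ne_zero

theorem Theta.rank_iff (T : Theta M.graph a b W) (h0 : Odd (W 0).length)
    (h1 : Even (W 1).length) (h2 : Even (W 2).length) :
    M.hRank + 2 = Fintype.card V ↔
    (Complex.I ^ gexp M W 1 (W 1).length = Complex.I ^ gexp M W 2 (W 2).length ∧
    (Complex.I ^ gexp M W 0 (W 0).length) ^ 2 = (Complex.I ^ gexp M W 1 (W 1).length) ^ 2) := by
  have hrn := LinearMap.finrank_range_add_finrank_ker M.hMatrix.mulVecLin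
  rw [Module.finrank_fintype_fun_eq_card] at hrn
  have hr : M.hRank = Module.finrank ℂ (LinearMap.range M.hMatrix.mulVecLin) := rfl
  rw [← hr] at hrn
  let K := LinearMap.ker M.hMatrix.mulVecLin
  let L : K →ₗ[ℂ] (Fin 2 → ℂ) :=
    (LinearMap.funLeft ℂ ℂ ![a, (W 1).getVert 1]) ∘ₗ K.subtype
  have hL0 : ∀ x : K, L x 0 = x.1 a := fun x => rfl
  have hL1 : ∀ x : K, L x 1 = x.1 ((W 1).getVert 1) := fun x => rfl
  have hK : ∀ x : K, M.hMatrix.mulVec x.1 = 0 := fun x => x.2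
  have hinj : Function.Injective L := by
    rw [injective_iff_map_eq_zero]
    intro x hx
    have ha : x.1 a = 0 := by rw [← hL0, hx]; rfl
    have hb : x.1 ((W 1).getVert 1) = 0 := by rw [← hL1, hx]; rfl
    obtain ⟨F, hF⟩ := exists_F (M := M) (W := W) x.1
    obtain ⟨q1, q2, q3, q4, q5, q6⟩ := T.ker_eqs h0 h1 h2 x.1 F hF (hK x)
    have nz : ∀ m : ℤ, Complex.I ^ m ≠ 0 := fun m => zpow_ne_zero _ Complex.I_ne_zero
    have r1 : F 1 1 = 0 := by
      have := hF 1 1 (T.pos 1)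
      rw [hb, eq_comm, mul_eq_zero] at this
      exact this.resolve_left (nz _)
    have r0 : F 0 1 = 0 := by
      rw [q3, ha, mul_zero, eq_comm, mul_eq_zero] at q2
      exact q2.resolve_left (nz _)
    have r2 : F 2 1 = 0 := by
      rw [r0, r1] at q5
      simpa using q5
    have r : ∀ j, F j 1 = 0 := by
      intro j
      fin_cases j
      exacts [r0, r1, r2]
    apply Subtype.ext
    funext v
    obtain ⟨j, i, hi, rfl⟩ := T.covers v
    rw [hF j i hi, T.ker_parity x.1 F hF (hK x) j i hi]
    rcases Nat.mod_two_eq_zero_or_one i with h | h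
    · rw [h, q1, ha, mul_zero]; rfl
    · rw [h, r, mul_zero]; rfl
  have hfin2 : Module.finrank ℂ (Fin 2 → ℂ) = 2 := by simp
  constructor
  · intro h
    have hk : Module.finrank ℂ K = 2 := by
      change M.hRank + Module.finrank ℂ K = _ at hrn
      omega
    have hsurj : Function.Surjective L :=
      (LinearMap.injective_iff_surjective_of_finrank_eq_finrank (hk.trans hfin2.symm)).1 hinj
    obtain ⟨x, hx⟩ := hsurj ![1, 0]
    have ha : x.1 a = 1 := by rw [← hL0, hx]; rfl
    have hb : x.1 ((W 1).getVert 1) = 0 := by rw [← hL1, hx]; rfl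
    obtain ⟨F, hF⟩ := exists_F (M := M) (W := W) x.1
    obtain ⟨q1, q2, q3, q4, q5, q6⟩ := T.ker_eqs h0 h1 h2 x.1 F hF (hK x)
    have r1 : F 1 1 = 0 := by
      have := hF 1 1 (T.pos 1)
      rw [hb, eq_comm, mul_eq_zero] at this
      exact this.resolve_left (zpow_ne_zero _ Complex.I_ne_zero)
    rw [ha, mul_one] at q3 q4 q6
    rw [r1] at q5 q6
    have e1 := q3.symm.trans q4
    refine ⟨e1, ?_⟩
    have e2 := q3.symm.trans q2
    rw [← e1] at q6
    generalize Complex.I ^ gexp M W 0 (W 0).length = E0 at *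
    generalize Complex.I ^ gexp M W 1 (W 1).length = E1 at *
    linear_combination E0 * q6 - E1 * e2 - E0 * E1 * q5
  · rintro ⟨e1, e2⟩
    have hsurj : Function.Surjective L := by
      intro y
      obtain ⟨f, hf, ha, hb⟩ := T.exists_ker h0 h1 h2 e1 e2 (y 0) (y 1)
      refine ⟨⟨f, hf⟩, ?_⟩
      funext s
      fin_cases s
      exacts [ha, hb]
    have hk := (LinearEquiv.ofBijective L ⟨hinj, hsurj⟩).finrank_eq
    rw [hfin2] at hk
    change M.hRank + Module.finrank ℂ K = _ at hrn
    omega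
end
/-- Let G̃ be a mixed bicyclic graph with underlying graph
θ(p,l,q), p even, l and q odd. Then r(G̃) = 2m(G) − 2κ(G) iff the two odd cycles of
G̃ have odd signatures and the even cycle C̃_{q+l−2} satisfies
q + l + σ(C̃_{q+l−2}) ≡ 2 (mod 4). -/
theorem theta_hRank_eq_lower_bound_iff
    {V : Type u} [Fintype V] [DecidableEq V] (M : MixedGraph V) (p l q : ℕ)
    (hp : Even p) (hl : Odd l) (hq : Odd q) (hG : IsThetaGraph M.graph p l q) :
    (M.hRank : ℤ) =
        2 * (matchingNumber M.graph : ℤ) - 2 * (evenCycleCount M.graph : ℤ) ↔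
      (OddCyclesSig M Odd ∧ EvenCyclesSig M (fun _ s => (q + l + s) % 4 = 2)) := by
  obtain ⟨p2, l2, q2, -, -, -, a, b, W₁, W₂, W₃, hP1, hP2, hP3, L1, L2, L3, hc, he, d1, d2, d3⟩ := hG
  let W : Fin 3 → M.graph.Walk a b := ![W₁, W₂, W₃]
  have k0 : (W 0).length = p - 1 := L1
  have k1 : (W 1).length = l - 1 := L2
  have k2 : (W 2).length = q - 1 := L3
  rw [Nat.even_iff] at hp
  rw [Nat.odd_iff] at hl hq
  have D1 : ∀ v, v ∈ W₁.support → v ∈ W₂.support → v = a ∨ v = b := by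
    intro v h h'
    have : v ∈ ({a, b} : Set V) := d1 ▸ (⟨h, h'⟩ : v ∈ {v | v ∈ W₁.support ∧ v ∈ W₂.support})
    simpa using this
  have D2 : ∀ v, v ∈ W₁.support → v ∈ W₃.support → v = a ∨ v = b := by
    intro v h h'
    have : v ∈ ({a, b} : Set V) := d2 ▸ (⟨h, h'⟩ : v ∈ {v | v ∈ W₁.support ∧ v ∈ W₃.support})
    simpa using this
  have D3 : ∀ v, v ∈ W₂.support → v ∈ W₃.support → v = a ∨ v = b := by
    intro v h h'
    have : v ∈ ({a, b} : Set V) := d3 ▸ (⟨h, h'⟩ : v ∈ {v | v ∈ W₂.support ∧ v ∈ W₃.support})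
    simpa using this
  have T : Theta M.graph a b W := by
    constructor
    · intro j
      fin_cases j
      exacts [hP1, hP2, hP3]
    · intro j
      fin_cases j
      · change 1 ≤ (W 0).length
        omega
      · change 1 ≤ (W 1).length
        omega
      · change 1 ≤ (W 2).length
        omega
    · intro j hj
      fin_cases j
      · exact absurd rfl hj
      · change 2 ≤ (W 1).length
        omega
      · change 2 ≤ (W 2).length
        omega
    · intro v
      rcases hc v with h | h | h
      exacts [⟨0, h⟩, ⟨1, h⟩, ⟨2, h⟩]
    · intro e hee
      rcases he e hee with h | h | h
      exacts [⟨0, h⟩, ⟨1, h⟩, ⟨2, h⟩]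
    · intro j j' hne v h h'
      fin_cases j <;> fin_cases j'
      · exact absurd rfl hne
      · exact D1 v h h'
      · exact D2 v h h'
      · exact D1 v h' h
      · exact absurd rfl hne
      · exact D3 v h h'
      · exact D2 v h' h
      · exact D3 v h' h
      · exact absurd rfl hne
  have h0 : Odd (W 0).length := Nat.odd_iff.2 (by omega)
  have h1 : Even (W 1).length := Nat.even_iff.2 (by omega)
  have h2 : Even (W 2).length := Nat.even_iff.2 (by omega)
  have hm := T.matchingNumber_eq h0 h1 h2
  have hk := T.evenCycleCount_eq h0 h1 h2
  have hr := T.rank_iff h0 h1 h2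
  have lhs : (M.hRank : ℤ) =
        2 * (matchingNumber M.graph : ℤ) - 2 * (evenCycleCount M.graph : ℤ) ↔
        M.hRank + 2 = Fintype.card V := by
    rw [hk]; omega
  have n01 : (0 : Fin 3) ≠ 1 := by decide
  have n02 : (0 : Fin 3) ≠ 2 := by decide
  have n12 : (1 : Fin 3) ≠ 2 := by decide
  have c01 := T.cyc_ncard n01
  have c02 := T.cyc_ncard n02
  have c12 := T.cyc_ncard n12
  have rhs : (OddCyclesSig M Odd ∧ EvenCyclesSig M (fun _ s => (q + l + s) % 4 = 2)) ↔
      Odd (pot M (W 0) (W 0).length - pot M (W 1) (W 1).length).natAbs ∧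
      Odd (pot M (W 0) (W 0).length - pot M (W 2) (W 2).length).natAbs ∧
      (q + l + (pot M (W 1) (W 1).length - pot M (W 2) (W 2).length).natAbs) % 4 = 2 := by
    rw [← T.cycleSig_iff n01 Odd, ← T.cycleSig_iff n02 Odd,
      ← T.cycleSig_iff n12 (fun s => (q + l + s) % 4 = 2)]
    constructor
    · rintro ⟨A, B⟩
      refine ⟨A _ (cycle_isCycleSubgraph (T.isCycle n01)) ?_,
        A _ (cycle_isCycleSubgraph (T.isCycle n02)) ?_,
        B _ (cycle_isCycleSubgraph (T.isCycle n12)) ?_⟩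
      · rw [c01]; exact h0.add_even h1
      · rw [c02]; exact h0.add_even h2
      · rw [c12]; exact h1.add h2
    · rintro ⟨A, A', B⟩
      constructor
      · intro C hC ho
        rcases T.classify hC with rfl | rfl | rfl
        · exact A
        · exact A'
        · rw [c12] at ho
          exact absurd (h1.add h2) (Nat.not_even_iff_odd.2 ho)
      · intro C hC ho
        rcases T.classify hC with rfl | rfl | rfl
        · rw [c01] at ho
          exact absurd ho (Nat.not_even_iff_odd.2 (h0.add_even h1))
        · rw [c02] at ho
          exact absurd ho (Nat.not_even_iff_odd.2 (h0.add_even h2))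
        · exact B
  rw [lhs, hr, rhs, I_zpow_eq_iff, ← zpow_natCast, ← zpow_natCast, ← zpow_mul, ← zpow_mul,
    I_zpow_eq_iff, Nat.odd_iff, Nat.odd_iff]
  unfold gexp
  generalize pot M (W 0) (W 0).length = S0
  generalize pot M (W 1) (W 1).length = S1
  generalize pot M (W 2) (W 2).length = S2
  rw [k0, k1, k2]
  push_cast
  omega

end MixedPaper
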